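/- arXiv:math/0307278 — 6 statements merged into one kernel-verified Lean document; each statement's English description precedes it below -/
import Mathlib

section
/- Let a¹,…,aⁿ be complex N×N matrices with ellipticity constant η > 0, and set λ = πη. Then for every k ∈ ℤⁿ and every u ∈ ℂᴺ one has ‖(2πi ∑_{j=1}^n k_j aʲ + λ·Id)u‖² ≥ π²η²(2|k| − 1)²‖u‖², where |k| denotes the Euclidean norm of k ∈ ℤⁿ ⊂ ℝⁿ. In particular, for every k ∈ ℤⁿ the complex N×N matrix 2πi ∑_{j=1}^n k_j aʲ + λ·Id is invertible. -/
open Real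

/-!
Write `A = ∑ k_j aʲ`, which ellipticity bounds below by `η|k|`. For `k = 0` the matrix
`2πi A + πη` is multiplication by `πη`, and the estimate is an equality. For `k ≠ 0` integrality
gives `|k| ≥ 1`, and the reverse triangle inequality yields
`‖(2πi A + πη)u‖ ≥ 2π‖Au‖ - πη‖u‖ ≥ πη(2|k| - 1)‖u‖ ≥ 0`, which can be squared. In both cases
`2|k| - 1 ≠ 0`, so the matrix has trivial kernel and is invertible.
-/

/-- The Euclidean norm takes no values in `(0, 1)` on the integer lattice. -/
lemma one_le_norm_of_int_ne_zero {n : ℕ} (k : Fin n → ℤ) (hk : k ≠ 0) :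
    1 ≤ ‖(EuclideanSpace.equiv (Fin n) ℝ).symm (fun j => (k j : ℝ))‖ := by
  obtain ⟨j, hj⟩ := Function.ne_iff.mp hk
  have h := PiLp.norm_apply_le ((EuclideanSpace.equiv (Fin n) ℝ).symm (fun j => (k j : ℝ))) j
  refine le_trans ?_ h
  simp only [PiLp.coe_symm_continuousLinearEquiv, Real.norm_eq_abs]
  exact_mod_cast Int.one_le_abs hj

/-- Spectral estimate for the Fourier modes of a constant-coefficient elliptic
operator `L₀ = aʲ∂_j` on the torus: for `λ = πη` one has
`‖(2πi ∑ k_j aʲ + λ)u‖² ≥ π²η²(2|k|-1)²‖u‖²`, and each matrix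
`2πi ∑ k_j aʲ + λ·Id` is invertible. -/
theorem stmt_0 (n N : ℕ) (hn : 1 ≤ n) (hN : 1 ≤ N)
    (a : Fin n → Matrix (Fin N) (Fin N) ℂ) (η : ℝ) (hη : 0 < η)
    (hell : ∀ (ξ : EuclideanSpace ℝ (Fin n)) (V : EuclideanSpace ℂ (Fin N)),
      η * ‖ξ‖ * ‖V‖ ≤ ‖Matrix.toEuclideanLin (∑ j, (ξ j : ℂ) • a j) V‖) :
    ∀ k : Fin n → ℤ,
      (∀ u : EuclideanSpace ℂ (Fin N),
        π ^ 2 * η ^ 2 *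
            (2 * ‖(EuclideanSpace.equiv (Fin n) ℝ).symm (fun j => (k j : ℝ))‖ - 1) ^ 2 *
            ‖u‖ ^ 2 ≤
          ‖Matrix.toEuclideanLin
              ((2 * (π : ℂ) * Complex.I) • ∑ j, (k j : ℂ) • a j +
                ((π * η : ℝ) : ℂ) • (1 : Matrix (Fin N) (Fin N) ℂ)) u‖ ^ 2) ∧
      IsUnit ((2 * (π : ℂ) * Complex.I) • ∑ j, (k j : ℂ) • a j +
                ((π * η : ℝ) : ℂ) • (1 : Matrix (Fin N) (Fin N) ℂ)) := by
  intro k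
  set x : EuclideanSpace ℝ (Fin n) :=
    (EuclideanSpace.equiv (Fin n) ℝ).symm (fun j => (k j : ℝ)) with hx
  set A : Matrix (Fin N) (Fin N) ℂ := ∑ j, (k j : ℂ) • a j with hA
  set M : Matrix (Fin N) (Fin N) ℂ := (2 * (π : ℂ) * Complex.I) • A +
    ((π * η : ℝ) : ℂ) • (1 : Matrix (Fin N) (Fin N) ℂ) with hM
  have hpη : 0 < π * η := mul_pos Real.pi_pos hη
  have hMu (u : EuclideanSpace ℂ (Fin N)) : Matrix.toEuclideanLin M u =
      (2 * (π : ℂ) * Complex.I) • Matrix.toEuclideanLin A u + ((π * η : ℝ) : ℂ) • u := by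
    ext i
    simp [hM, Matrix.toLpLin_apply, Matrix.add_mulVec, Matrix.smul_mulVec]
  have hAu (u : EuclideanSpace ℂ (Fin N)) : η * ‖x‖ * ‖u‖ ≤ ‖Matrix.toEuclideanLin A u‖ := by
    simpa [hx, hA] using hell x u
  have hscal (u : EuclideanSpace ℂ (Fin N)) : ‖((π * η : ℝ) : ℂ) • u‖ = π * η * ‖u‖ := by
    rw [norm_smul, Complex.norm_real, Real.norm_of_nonneg hpη.le]
  have hest (u : EuclideanSpace ℂ (Fin N)) :
      π ^ 2 * η ^ 2 * (2 * ‖x‖ - 1) ^ 2 * ‖u‖ ^ 2 ≤ ‖Matrix.toEuclideanLin M u‖ ^ 2 := by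
    have hsq : π ^ 2 * η ^ 2 * (2 * ‖x‖ - 1) ^ 2 * ‖u‖ ^ 2 =
        (π * η * (2 * ‖x‖ - 1) * ‖u‖) ^ 2 := by ring
    rw [hsq]
    rcases eq_or_ne k 0 with rfl | hk
    · have hA0 : A = 0 := by simp [hA]
      have hx0 : ‖x‖ = 0 := by
        rw [norm_eq_zero]
        ext i
        simp [hx]
      rw [hMu, hA0, map_zero, LinearMap.zero_apply, smul_zero, zero_add, hscal, hx0]
      exact le_of_eq (by ring)
    · have h1 : 1 ≤ ‖x‖ := one_le_norm_of_int_ne_zero k hk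
      have h2 : 0 ≤ 2 * ‖x‖ - 1 := by linarith
      refine pow_le_pow_left₀ (by positivity) ?_ 2
      have h3 : ‖(2 * (π : ℂ) * Complex.I) • Matrix.toEuclideanLin A u‖ =
          2 * π * ‖Matrix.toEuclideanLin A u‖ := by
        simp [norm_smul, abs_of_pos Real.pi_pos]
      have h4 := norm_sub_le_norm_add ((2 * (π : ℂ) * Complex.I) • Matrix.toEuclideanLin A u)
        (((π * η : ℝ) : ℂ) • u)
      rw [← hMu, h3, hscal] at h4
      have h5 := mul_le_mul_of_nonneg_left (hAu u) Real.two_pi_pos.le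
      linarith
  refine ⟨hest, ?_⟩
  have hne : 2 * ‖x‖ - 1 ≠ 0 := by
    rcases eq_or_ne k 0 with rfl | hk
    · have hx0 : x = 0 := by
        ext i
        simp [hx]
      simp [hx0]
    · have h1 : 1 ≤ ‖x‖ := one_le_norm_of_int_ne_zero k hk
      linarith
  rw [← Matrix.mulVec_injective_iff_isUnit]
  refine (injective_iff_map_eq_zero M.mulVecLin).mpr fun v hv => ?_
  have h := hest (WithLp.toLp 2 v)
  have h0 : Matrix.toEuclideanLin M (WithLp.toLp 2 v) = 0 := by
    rw [Matrix.mulVecLin_apply] at hv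
    simp [Matrix.toLpLin_apply, hv]
  rw [h0, norm_zero] at h
  have hc : 0 < π ^ 2 * η ^ 2 * (2 * ‖x‖ - 1) ^ 2 := by positivity
  have hv2 : ‖WithLp.toLp 2 v‖ ^ 2 = 0 :=
    le_antisymm (nonpos_of_mul_nonpos_right (by simpa using h) hc) (sq_nonneg _)
  simpa using hv2
end

section
/- Let a¹,…,aⁿ be complex N×N matrices with ellipticity constant η > 0. Then for every smooth compactly supported function v : ℝⁿ → ℂᴺ one has ∑_{j=1}^n ∫_{ℝⁿ} ‖∂_j v(x)‖² dx ≤ η^{-2} ∫_{ℝⁿ} ‖∑_{j=1}^n aʲ ∂_j v(x)‖² dx. -/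
open MeasureTheory

/-!
The estimate is the pointwise ellipticity bound on the Fourier side, integrated and carried back by
Plancherel. With `f` the Schwartz function given by `v` and `W = 2πi 𝓕 f(ξ)`, the transform of
`∂_j v` is `ξ_j W` (`fourier_partial_apply`), and that of `∑_j aʲ ∂_j v` is `(∑_j ξ_j aʲ) W`, as
constant matrices commute with the Fourier integral (`fourier_postcomp_apply`). Hence ellipticity
says precisely
`∑_j ‖ξ_j W‖² = ‖ξ‖² ‖W‖² ≤ η⁻² ‖(∑_j ξ_j aʲ) W‖²` (`sum_norm_sq_le_of_elliptic`).
-/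

open scoped SchwartzMap FourierTransform LineDeriv

theorem fourier_postcomp_apply {n N : ℕ}
    (L : EuclideanSpace ℂ (Fin N) →L[ℂ] EuclideanSpace ℂ (Fin N))
    (f : 𝓢(EuclideanSpace ℝ (Fin n), EuclideanSpace ℂ (Fin N)))
    (ξ : EuclideanSpace ℝ (Fin n)) :
    𝓕 (f.postcompCLM L) ξ = L (𝓕 f ξ) := by
  rw [SchwartzMap.fourier_coe, SchwartzMap.fourier_coe, Real.fourier_eq, Real.fourier_eq,
    ← ContinuousLinearMap.integral_comp_comm L
      ((Real.fourierIntegral_convergent_iff ξ).mpr f.integrable)]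
  simp [Circle.smul_def]

theorem fourier_partial_apply {n N : ℕ}
    (f : 𝓢(EuclideanSpace ℝ (Fin n), EuclideanSpace ℂ (Fin N)))
    (j : Fin n) (ξ : EuclideanSpace ℝ (Fin n)) :
    𝓕 (∂_{EuclideanSpace.single j (1 : ℝ)} f) ξ =
      (ξ j : ℂ) • ((2 * Real.pi * Complex.I : ℂ) • 𝓕 f ξ) := by
  have h : (fun x : EuclideanSpace ℝ (Fin n) =>
      inner ℝ x (EuclideanSpace.single j (1 : ℝ))).HasTemperateGrowth :=
    ((innerSL ℝ).flip (EuclideanSpace.single j (1 : ℝ))).hasTemperateGrowth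
  rw [SchwartzMap.fourier_lineDerivOp_eq, smul_comm, smul_apply,
    SchwartzMap.smulLeftCLM_apply_apply h]
  simp [EuclideanSpace.inner_single_right]

/-- Ellipticity of the symbol, with the factor `‖ξ‖²` distributed over the coordinates of `ξ`. -/
theorem sum_norm_sq_le_of_elliptic {n N : ℕ}
    (a : Fin n → Matrix (Fin N) (Fin N) ℂ) (η : ℝ) (hη : 0 < η)
    (hell : ∀ (ξ : EuclideanSpace ℝ (Fin n)) (V : EuclideanSpace ℂ (Fin N)),
      η * ‖ξ‖ * ‖V‖ ≤ ‖Matrix.toEuclideanLin (∑ j, (ξ j : ℂ) • a j) V‖)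
    (ξ : EuclideanSpace ℝ (Fin n)) (W : EuclideanSpace ℂ (Fin N)) :
    ∑ j, ‖(ξ j : ℂ) • W‖ ^ 2 ≤
      (η ^ 2)⁻¹ * ‖∑ j, Matrix.toEuclideanLin (a j) ((ξ j : ℂ) • W)‖ ^ 2 := by
  have h1 : ∑ j, ‖(ξ j : ℂ) • W‖ ^ 2 = ‖ξ‖ ^ 2 * ‖W‖ ^ 2 := by
    rw [EuclideanSpace.norm_sq_eq, Finset.sum_mul]
    simp [norm_smul, mul_pow]
  have h2 : ∑ j, Matrix.toEuclideanLin (a j) ((ξ j : ℂ) • W) =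
      Matrix.toEuclideanLin (∑ j, (ξ j : ℂ) • a j) W := by
    simp [-Complex.coe_smul, map_sum, LinearMap.sum_apply]
  rw [h1, h2, inv_mul_eq_div, le_div_iff₀ (by positivity)]
  calc ‖ξ‖ ^ 2 * ‖W‖ ^ 2 * η ^ 2 = (η * ‖ξ‖ * ‖W‖) ^ 2 := by ring
    _ ≤ _ := by gcongr; exact hell ξ W

/-- A priori gradient estimate for a constant-coefficient elliptic operator:
`∑_j ∫ ‖∂_j v‖² ≤ η⁻² ∫ ‖∑_j aʲ ∂_j v‖²` for smooth compactly supported `v`. -/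
theorem stmt_1 (n N : ℕ) (hn : 1 ≤ n) (hN : 1 ≤ N)
    (a : Fin n → Matrix (Fin N) (Fin N) ℂ) (η : ℝ) (hη : 0 < η)
    (hell : ∀ (ξ : EuclideanSpace ℝ (Fin n)) (V : EuclideanSpace ℂ (Fin N)),
      η * ‖ξ‖ * ‖V‖ ≤ ‖Matrix.toEuclideanLin (∑ j, (ξ j : ℂ) • a j) V‖)
    (v : EuclideanSpace ℝ (Fin n) → EuclideanSpace ℂ (Fin N))
    (hv : ContDiff ℝ (⊤ : ℕ∞) v) (hsupp : HasCompactSupport v) :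
    ∑ j, ∫ x, ‖fderiv ℝ v x (EuclideanSpace.single j 1)‖ ^ 2 ≤
      (η ^ 2)⁻¹ * ∫ x, ‖∑ j, Matrix.toEuclideanLin (a j)
          (fderiv ℝ v x (EuclideanSpace.single j 1))‖ ^ 2 := by
  let f : 𝓢(EuclideanSpace ℝ (Fin n), EuclideanSpace ℂ (Fin N)) := hsupp.toSchwartzMap hv
  let D (j : Fin n) := ∂_{EuclideanSpace.single j (1 : ℝ)} f
  let A (j : Fin n) := LinearMap.toContinuousLinearMap (Matrix.toEuclideanLin (a j))
  let g := ∑ j, (D j).postcompCLM (A j)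
  have hD (j : Fin n) (x) : fderiv ℝ v x (EuclideanSpace.single j 1) = D j x :=
    (SchwartzMap.lineDerivOp_apply_eq_fderiv _ f x).symm
  have hg (x) : ∑ j, Matrix.toEuclideanLin (a j) (D j x) = g x := by
    simp [g, A]
  have hFg (ξ) : 𝓕 g ξ = ∑ j, Matrix.toEuclideanLin (a j) (𝓕 (D j) ξ) := by
    have : 𝓕 g = ∑ j, 𝓕 ((D j).postcompCLM (A j)) :=
      map_sum (SchwartzMap.fourierTransformCLM ℂ) _ _
    rw [this, sum_apply]
    simp [fourier_postcomp_apply, A]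
  have hint (h : 𝓢(EuclideanSpace ℝ (Fin n), EuclideanSpace ℂ (Fin N))) :
      Integrable (fun x => ‖h x‖ ^ 2) :=
    (h.memLp 2).integrable_norm_pow (by norm_num)
  simp_rw [hD, hg]
  rw [← SchwartzMap.integral_norm_sq_fourier g,
    Finset.sum_congr rfl fun j _ => (SchwartzMap.integral_norm_sq_fourier (D j)).symm,
    ← integral_finsetSum _ (fun j _ => hint (𝓕 (D j))), ← integral_const_mul]
  refine integral_mono (integrable_finsetSum _ fun j _ => hint (𝓕 (D j)))
    ((hint (𝓕 g)).const_mul _) fun ξ => ?_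
  simp only [hFg, D, fourier_partial_apply]
  exact sum_norm_sq_le_of_elliptic a η hη hell ξ _
end

section
/- Let E be a real inner product space, δ > 0 and λ ∈ ℝ with λ ≠ 0, and let u : [0,δ] → E be continuously differentiable. Set ℓ = |λ|δ. Then |λ|·‖u(0)‖² ≤ ((1 + √(1+ℓ²))/ℓ) · ∫₀^δ ( ‖u'(x)‖² + λ²‖u(x)‖² ) dx. -/
open MeasureTheory

/-!
With the linear cut-off `φ x = 1 - x / δ`, which is `1` at `0` and vanishes at `δ`, the fundamental
theorem of calculus applied to `φ ‖u‖²` gives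
`‖u 0‖² = ∫ (‖u‖² / δ - 2 φ ⟪u, u'⟫)`. Put `p = |λ| ‖u‖`, `q = ‖u'‖` and `ℓ = |λ| δ`. Since
`0 ≤ φ ≤ 1`, Cauchy-Schwarz bounds `|λ|` times the integrand by
`p² / ℓ + 2 p q ≤ (1 / ℓ + 1) (p² + q²)`, and `1 / ℓ + 1 ≤ (1 + √(1 + ℓ²)) / ℓ`
because `ℓ ≤ √(1 + ℓ²)`.
-/

/-- Per-eigenmode trace inequality (Lemma 5.1 of the paper): with `ℓ = |λ|δ`,
`|λ|‖u(0)‖² ≤ ((1+√(1+ℓ²))/ℓ) ∫₀^δ (‖u'‖² + λ²‖u‖²)`. -/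
theorem stmt_4 {E : Type*} [NormedAddCommGroup E] [InnerProductSpace ℝ E]
    (δ lam : ℝ) (hδ : 0 < δ) (hlam : lam ≠ 0) (u : ℝ → E)
    (hu : ContDiffOn ℝ 1 u (Set.Icc 0 δ)) :
    |lam| * ‖u 0‖ ^ 2 ≤
      (1 + Real.sqrt (1 + (|lam| * δ) ^ 2)) / (|lam| * δ) *
        ∫ x in Set.Icc 0 δ,
          (‖derivWithin u (Set.Icc 0 δ) x‖ ^ 2 + lam ^ 2 * ‖u x‖ ^ 2) := by
  have hl : 0 < |lam| := abs_pos.mpr hlam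
  set v := derivWithin u (Set.Icc 0 δ) with hv
  have hvc : ContinuousOn v (Set.Icc 0 δ) :=
    hu.continuousOn_derivWithin (uniqueDiffOn_Icc hδ) le_rfl
  have huc : ContinuousOn u (Set.Icc 0 δ) := hu.continuousOn
  have hder : ∀ x ∈ Set.Ioo 0 δ, HasDerivAt u (v x) x := fun x hx =>
    ((hu.differentiableOn one_ne_zero) x (Set.Ioo_subset_Icc_self hx)).hasDerivWithinAt.hasDerivAt
      (Icc_mem_nhds hx.1 hx.2)
  set g : ℝ → ℝ := fun x => -(1 / δ) * ‖u x‖ ^ 2 + (1 - x / δ) * (2 * inner ℝ (u x) (v x)) with hg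
  have hgc : ContinuousOn g (Set.Icc 0 δ) := by
    have := huc.inner (𝕜 := ℝ) hvc
    fun_prop
  have hFTC : ∫ x in (0 : ℝ)..δ, g x = (1 - δ / δ) * ‖u δ‖ ^ 2 - (1 - 0 / δ) * ‖u 0‖ ^ 2 := by
    refine intervalIntegral.integral_eq_sub_of_hasDerivAt_of_le
      (f := fun x => (1 - x / δ) * ‖u x‖ ^ 2) hδ.le (by fun_prop) (fun x hx => ?_)
      (ContinuousOn.intervalIntegrable (by rwa [Set.uIcc_of_le hδ.le]))
    have h1 : HasDerivAt (fun x : ℝ => 1 - x / δ) (-(1 / δ)) x :=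
      ((hasDerivAt_id x).div_const δ).const_sub 1
    exact h1.mul (hder x hx).norm_sq
  rw [div_self hδ.ne', intervalIntegral.integral_of_le hδ.le, ← integral_Icc_eq_integral_Ioc] at hFTC
  have key : |lam| * ‖u 0‖ ^ 2 = ∫ x in Set.Icc 0 δ, -|lam| * g x := by
    rw [integral_const_mul, hFTC]; ring
  rw [key, ← integral_const_mul]
  refine setIntegral_mono_on (ContinuousOn.integrableOn_Icc (by fun_prop))
    (ContinuousOn.integrableOn_Icc (by fun_prop)) measurableSet_Icc (fun x hx => ?_)
  have hφ0 : 0 ≤ 1 - x / δ := sub_nonneg.mpr ((div_le_one hδ).mpr hx.2)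
  have hφ1 : 1 - x / δ ≤ 1 := sub_le_self _ (div_nonneg hx.1 hδ.le)
  have hCS : -(‖u x‖ * ‖v x‖) ≤ inner ℝ (u x) (v x) :=
    (abs_le.mp (abs_real_inner_le_norm (u x) (v x))).1
  have hφCS : -(‖u x‖ * ‖v x‖) ≤ (1 - x / δ) * inner ℝ (u x) (v x) := by
    nlinarith [mul_nonneg (norm_nonneg (u x)) (norm_nonneg (v x)),
      mul_le_mul_of_nonneg_left hCS hφ0]
  have hC : 1 / (|lam| * δ) + 1 ≤ (1 + √(1 + (|lam| * δ) ^ 2)) / (|lam| * δ) := by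
    have hℓ : 0 < |lam| * δ := by positivity
    rw [div_add_one hℓ.ne']
    gcongr
    exact Real.le_sqrt_of_sq_le (by linarith)
  have hsq : lam ^ 2 = |lam| ^ 2 := (sq_abs lam).symm
  calc -|lam| * g x
      ≤ |lam| / δ * ‖u x‖ ^ 2 + 2 * (|lam| * ‖u x‖) * ‖v x‖ := by
        have := mul_le_mul_of_nonneg_left hφCS hl.le
        simp only [hg]
        linear_combination 2 * this
    _ ≤ (1 / (|lam| * δ) + 1) * (‖v x‖ ^ 2 + lam ^ 2 * ‖u x‖ ^ 2) := by
        have h1 : |lam| / δ * ‖u x‖ ^ 2 = 1 / (|lam| * δ) * (|lam| ^ 2 * ‖u x‖ ^ 2) := by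
          field_simp
        have h2 : 0 ≤ 1 / (|lam| * δ) * ‖v x‖ ^ 2 := by positivity
        rw [h1, hsq]
        nlinarith [sq_nonneg (|lam| * ‖u x‖ - ‖v x‖)]
    _ ≤ _ := by gcongr
end

section
/- Let δ > 0, κ > 0, θ₀ ∈ (0,1), ℓ = κδ, and let λ ∈ ℝ satisfy |λ| ≤ θ₀κ. Let f : [0,δ] → ℝ be continuous and define u(x) = −∫ₓ^δ e^{λ(s−x)} f(s) ds. Then u is continuously differentiable with u'(x) + λu(x) = f(x) and u(δ) = 0, and moreover (i) ∫₀^δ ( u'(x)² + κ² u(x)² ) dx ≤ (1 + θ₀² + (3/2) ℓ² e^{2ℓθ₀}) ∫₀^δ f(s)² ds, and (ii) κ·u(0)² ≤ ℓ e^{2ℓθ₀} ∫₀^δ f(s)² ds. -/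
/-!
Factoring the kernel, `u x = -e^{-λx} ∫ₓ^δ e^{λs} f s ds`, so the differential equation is the
fundamental theorem of calculus together with the product rule.

The estimates rest on one pointwise bound, `mode_sq_le`: since `2λ(s - x) ≤ 2ℓθ₀` for
`0 ≤ x ≤ s ≤ δ`, the Cauchy–Schwarz inequality gives `u(x)² ≤ (δ - x) e^{2ℓθ₀} ∫₀^δ f²`.
At `x = 0` this is the boundary estimate, and integrating it gives
`∫₀^δ u² ≤ (δ²/2) e^{2ℓθ₀} ∫₀^δ f²`. The energy estimate then follows from the pointwise inequality
`(f - λu)² + κ²u² ≤ (1 + θ₀²) f² + 3κ²u²`, which is Young's inequality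
`-2λfu ≤ θ₀² f² + (λ/θ₀)² u²` combined with `(λ/θ₀)² ≤ κ²` and `λ² ≤ κ²`.
-/

open MeasureTheory

/-- Cauchy–Schwarz on an interval, with an upper bound `B` in place of `∫ h²`. -/
lemma sq_integral_mul_le {a b B : ℝ} (hab : a ≤ b) (hB : 0 < B) {h g : ℝ → ℝ}
    (hh : Continuous h) (hg : Continuous g) (hhB : ∫ s in a..b, h s ^ 2 ≤ B) :
    (∫ s in a..b, h s * g s) ^ 2 ≤ B * ∫ s in a..b, g s ^ 2 := by
  set C := ∫ s in a..b, h s * g s with hC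
  -- `t = C / B` minimises the upper bound `∫ g² - 2tC + t²B` of `∫ (g - t h)²`.
  set t := C / B with ht
  have hpos : 0 ≤ ∫ s in a..b, (g s - t * h s) ^ 2 :=
    intervalIntegral.integral_nonneg hab fun s _ => sq_nonneg _
  have hexp : ∫ s in a..b, (g s - t * h s) ^ 2
      = (∫ s in a..b, g s ^ 2) - 2 * t * C + t ^ 2 * ∫ s in a..b, h s ^ 2 := by
    rw [hC, ← intervalIntegral.integral_const_mul, ← intervalIntegral.integral_const_mul,
      ← intervalIntegral.integral_sub, ← intervalIntegral.integral_add]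
    · congr 1
      ext s
      ring
    all_goals exact Continuous.intervalIntegrable (by fun_prop) _ _
  have hCt : C = t * B := by rw [ht]; field_simp
  have h1 : t ^ 2 * ∫ s in a..b, h s ^ 2 ≤ t ^ 2 * B :=
    mul_le_mul_of_nonneg_left hhB (sq_nonneg t)
  have h2 : t ^ 2 * B ≤ ∫ s in a..b, g s ^ 2 := by
    rw [hCt] at hexp
    linarith
  rw [hCt]
  nlinarith [mul_le_mul_of_nonneg_left h2 hB.le]

lemma mode_sq_le {δ κ θ₀ lam x : ℝ} (hlam : |lam| ≤ θ₀ * κ)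
    (hx : x ∈ Set.Icc 0 δ) {g : ℝ → ℝ} (hg : Continuous g) :
    (∫ s in x..δ, Real.exp (lam * (s - x)) * g s) ^ 2
      ≤ (δ - x) * (Real.exp (2 * (κ * δ) * θ₀) * ∫ s in (0 : ℝ)..δ, g s ^ 2) := by
  obtain ⟨hx0, hxδ⟩ := hx
  rcases hxδ.eq_or_lt with rfl | hlt
  · simp
  have hB : 0 < (δ - x) * Real.exp (2 * (κ * δ) * θ₀) :=
    mul_pos (sub_pos.2 hlt) (Real.exp_pos _)
  have hkernel : ∫ s in x..δ, Real.exp (lam * (s - x)) ^ 2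
      ≤ (δ - x) * Real.exp (2 * (κ * δ) * θ₀) := by
    have hle : ∫ s in x..δ, Real.exp (lam * (s - x)) ^ 2
        ≤ ∫ _ in x..δ, Real.exp (2 * (κ * δ) * θ₀) := by
      apply intervalIntegral.integral_mono_on hxδ
      · exact Continuous.intervalIntegrable (by fun_prop) _ _
      · exact Continuous.intervalIntegrable (by fun_prop) _ _
      · intro s hs
        rw [← Real.exp_nat_mul]
        apply Real.exp_le_exp.2
        have h1 : lam * (s - x) ≤ θ₀ * κ * (s - x) :=
          mul_le_mul_of_nonneg_right ((le_abs_self _).trans hlam) (sub_nonneg.2 hs.1)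
        have h2 : θ₀ * κ * (s - x) ≤ θ₀ * κ * δ :=
          mul_le_mul_of_nonneg_left (by linarith [hs.2]) ((abs_nonneg _).trans hlam)
        push_cast
        linarith
    simpa using hle
  have hsub : ∫ s in x..δ, g s ^ 2 ≤ ∫ s in (0 : ℝ)..δ, g s ^ 2 := by
    have hi : ∀ a b : ℝ, IntervalIntegrable (fun s => g s ^ 2) volume a b :=
      fun a b => Continuous.intervalIntegrable (by fun_prop) _ _
    rw [← intervalIntegral.integral_add_adjacent_intervals (hi 0 x) (hi x δ)]
    have : 0 ≤ ∫ s in (0 : ℝ)..x, g s ^ 2 :=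
      intervalIntegral.integral_nonneg hx0 fun s _ => sq_nonneg _
    linarith
  calc _ ≤ (δ - x) * Real.exp (2 * (κ * δ) * θ₀) * ∫ s in x..δ, g s ^ 2 :=
        sq_integral_mul_le hxδ hB (by fun_prop) hg hkernel
    _ ≤ (δ - x) * Real.exp (2 * (κ * δ) * θ₀) * ∫ s in (0 : ℝ)..δ, g s ^ 2 :=
        mul_le_mul_of_nonneg_left hsub hB.le
    _ = _ := by ring

lemma hasDerivAt_mode (δ lam x : ℝ) {g : ℝ → ℝ} (hg : Continuous g) :
    HasDerivAt (fun y => -∫ s in y..δ, Real.exp (lam * (s - y)) * g s)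
      (g x - lam * -∫ s in x..δ, Real.exp (lam * (s - x)) * g s) x := by
  have hfac : ∀ y, ∫ s in y..δ, Real.exp (lam * (s - y)) * g s
      = Real.exp (-(lam * y)) * ∫ s in y..δ, Real.exp (lam * s) * g s := by
    intro y
    rw [← intervalIntegral.integral_const_mul]
    congr 1
    ext s
    rw [← mul_assoc, ← Real.exp_add]
    ring_nf
  simp only [hfac]
  have hc : Continuous fun s => Real.exp (lam * s) * g s := by fun_prop
  have hI : HasDerivAt (fun y => ∫ s in y..δ, Real.exp (lam * s) * g s)
      (-(Real.exp (lam * x) * g x)) x :=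
    intervalIntegral.integral_hasDerivAt_left (hc.intervalIntegrable _ _)
      (hc.stronglyMeasurableAtFilter _ _) hc.continuousAt
  have hE : HasDerivAt (fun y => Real.exp (-(lam * y))) (Real.exp (-(lam * x)) * -(lam * 1)) x :=
    (((hasDerivAt_id x).const_mul lam).neg).exp
  refine (hE.mul hI).neg.congr_deriv ?_
  have hee : Real.exp (-(lam * x)) * Real.exp (lam * x) = 1 := by
    rw [← Real.exp_add]; simp
  linear_combination g x * hee

lemma energy_density_le {κ θ₀ lam : ℝ} (hκ : 0 < κ) (hθ₀ : θ₀ ∈ Set.Ioo (0 : ℝ) 1)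
    (hlam : |lam| ≤ θ₀ * κ) (a v : ℝ) :
    (a - lam * v) ^ 2 + κ ^ 2 * v ^ 2 ≤ (1 + θ₀ ^ 2) * a ^ 2 + 3 * κ ^ 2 * v ^ 2 := by
  obtain ⟨h0, h1⟩ := hθ₀
  set m := lam / θ₀ with hm
  have hlm : lam = θ₀ * m := by rw [hm]; field_simp
  have hmκ : m ^ 2 ≤ κ ^ 2 := by
    apply sq_le_sq.2
    rw [abs_of_pos hκ]
    rw [hlm, abs_mul, abs_of_pos h0] at hlam
    exact le_of_mul_le_mul_left hlam h0
  have hlκ : lam ^ 2 ≤ κ ^ 2 := by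
    rw [hlm, mul_pow]
    exact (mul_le_of_le_one_left (sq_nonneg m) (pow_le_one₀ h0.le h1.le)).trans hmκ
  have e1 := mul_le_mul_of_nonneg_right hmκ (sq_nonneg v)
  have e2 := mul_le_mul_of_nonneg_right hlκ (sq_nonneg v)
  have e3 : -(2 * lam * a * v) ≤ θ₀ ^ 2 * a ^ 2 + m ^ 2 * v ^ 2 := by
    rw [hlm]
    nlinarith [sq_nonneg (θ₀ * a + m * v)]
  nlinarith

/-- Small-eigenvalue mode estimates from the proof of Lemma 5.2: with
`ℓ = κδ`, `|λ| ≤ θ₀κ` and `u(x) = -∫ₓ^δ e^{λ(s-x)} f(s) ds`, the function `u`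
is continuously differentiable with `u' + λu = f`, `u(δ) = 0`, and satisfies
`∫₀^δ (u'² + κ²u²) ≤ (1 + θ₀² + (3/2)ℓ²e^{2ℓθ₀}) ∫₀^δ f²` and
`κ u(0)² ≤ ℓ e^{2ℓθ₀} ∫₀^δ f²`. -/
theorem stmt_5 (δ κ θ₀ lam : ℝ) (hδ : 0 < δ) (hκ : 0 < κ)
    (hθ₀ : θ₀ ∈ Set.Ioo (0 : ℝ) 1) (hlam : |lam| ≤ θ₀ * κ)
    (f : ℝ → ℝ) (hf : ContinuousOn f (Set.Icc 0 δ))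
    (u : ℝ → ℝ)
    (hu : ∀ x, u x = -∫ s in Set.Icc x δ, Real.exp (lam * (s - x)) * f s) :
    (∀ x ∈ Set.Icc 0 δ, HasDerivWithinAt u (f x - lam * u x) (Set.Icc 0 δ) x) ∧
    ContinuousOn u (Set.Icc 0 δ) ∧
    u δ = 0 ∧
    (∫ x in Set.Icc 0 δ, ((f x - lam * u x) ^ 2 + κ ^ 2 * u x ^ 2)) ≤
      (1 + θ₀ ^ 2 + 3 / 2 * (κ * δ) ^ 2 * Real.exp (2 * (κ * δ) * θ₀)) *
        ∫ s in Set.Icc 0 δ, f s ^ 2 ∧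
    κ * u 0 ^ 2 ≤
      κ * δ * Real.exp (2 * (κ * δ) * θ₀) * ∫ s in Set.Icc 0 δ, f s ^ 2 := by
  -- Only the values of `f` on `[0, δ]` matter: replace it by a continuous extension `g`.
  obtain ⟨g, hg, hgf⟩ : ∃ g : ℝ → ℝ, Continuous g ∧ ∀ x ∈ Set.Icc 0 δ, g x = f x :=
    ⟨Set.IccExtend hδ.le ((Set.Icc 0 δ).domRestrict f),
      (continuousOn_iff_continuous_domRestrict.1 hf).Icc_extend',
      fun x hx => Set.IccExtend_of_mem hδ.le _ hx⟩
  have hug : ∀ x ∈ Set.Icc 0 δ, u x = -∫ s in x..δ, Real.exp (lam * (s - x)) * g s := by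
    intro x hx
    rw [hu, intervalIntegral.integral_of_le hx.2, ← integral_Icc_eq_integral_Ioc]
    congr 1
    apply setIntegral_congr_fun measurableSet_Icc
    intro s hs
    simp only [hgf s ⟨hx.1.trans hs.1, hs.2⟩]
  have hF : ∫ s in Set.Icc 0 δ, f s ^ 2 = ∫ s in (0 : ℝ)..δ, g s ^ 2 := by
    rw [intervalIntegral.integral_of_le hδ.le, ← integral_Icc_eq_integral_Ioc]
    apply setIntegral_congr_fun measurableSet_Icc
    intro s hs
    simp only [hgf s hs]
  have hderiv : ∀ x ∈ Set.Icc 0 δ,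
      HasDerivWithinAt u (f x - lam * u x) (Set.Icc 0 δ) x := by
    intro x hx
    rw [← hgf x hx, hug x hx]
    exact (hasDerivAt_mode δ lam x hg).hasDerivWithinAt.congr hug (hug x hx)
  have hcont : ContinuousOn u (Set.Icc 0 δ) := fun x hx => (hderiv x hx).continuousWithinAt
  have hsq : ∀ x ∈ Set.Icc 0 δ,
      u x ^ 2 ≤ (δ - x) * (Real.exp (2 * (κ * δ) * θ₀) * ∫ s in (0 : ℝ)..δ, g s ^ 2) := by
    intro x hx
    rw [hug x hx, neg_sq]
    exact mode_sq_le hlam hx hg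
  refine ⟨hderiv, hcont, ?_, ?_, ?_⟩
  · rw [hug δ ⟨hδ.le, le_rfl⟩]
    simp
  · rw [hF]
    set F := ∫ s in (0 : ℝ)..δ, g s ^ 2 with hFdef
    set E := Real.exp (2 * (κ * δ) * θ₀) with hE
    have hmono : ∫ x in Set.Icc 0 δ, ((f x - lam * u x) ^ 2 + κ ^ 2 * u x ^ 2)
        ≤ ∫ x in Set.Icc 0 δ, ((1 + θ₀ ^ 2) * g x ^ 2 + 3 * κ ^ 2 * ((δ - x) * (E * F))) := by
      apply setIntegral_mono_on
      · exact ContinuousOn.integrableOn_Icc (by fun_prop)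
      · exact Continuous.integrableOn_Icc (by fun_prop)
      · exact measurableSet_Icc
      · intro x hx
        have h1 := energy_density_le hκ hθ₀ hlam (f x) (u x)
        have h2 := mul_le_mul_of_nonneg_left (hsq x hx) (by positivity : 0 ≤ 3 * κ ^ 2)
        rw [hgf x hx]
        linarith
    refine hmono.trans_eq ?_
    have hlin : ∫ x in (0 : ℝ)..δ, (δ - x) = δ ^ 2 / 2 := by
      rw [intervalIntegral.integral_sub (by simp) (by simp)]
      simp
      ring
    rw [integral_Icc_eq_integral_Ioc, ← intervalIntegral.integral_of_le hδ.le,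
      intervalIntegral.integral_add (Continuous.intervalIntegrable (by fun_prop) _ _)
        (Continuous.intervalIntegrable (by fun_prop) _ _),
      intervalIntegral.integral_const_mul, intervalIntegral.integral_const_mul,
      intervalIntegral.integral_mul_const, hlin, ← hFdef]
    ring
  · rw [hF]
    have h := mul_le_mul_of_nonneg_left (hsq 0 ⟨le_rfl, hδ.le⟩) hκ.le
    rw [sub_zero] at h
    linarith
end

section
/- Let n ≥ 3 and N ≥ 1 be integers and R₀ > 0. Let Γ₁,…,Γₙ : ℝⁿ → M_N(ℝ) be continuous matrix-valued functions, and let v : ℝⁿ → ℝᴺ be a C¹ function with compact support contained in {x ∈ ℝⁿ : ‖x‖ > R₀}. Define ∇_i v(x) = ∂_i v(x) − Γ_i(x)v(x), Γ^S_i(x) = (Γ_i(x) + Γ_i(x)ᵀ)/2, and Γ^S_r(x) = ‖x‖^{-1} ∑_{i=1}^n x_i Γ^S_i(x). Then ((n−2)²/4) ∫_{ℝⁿ} ‖v(x)‖² ‖x‖^{−2} dx ≤ ∫_{ℝⁿ} ∑_{i=1}^n ‖∇_i v(x)‖² dx + (n−2) ∫_{ℝⁿ} ‖x‖^{−1} ‖Γ^S_r(x)‖_op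 ‖v(x)‖² dx. -/
/-!
Write `c = n - 2` and `∇ᵢv = ∂ᵢv - Γᵢv`. Two facts carry the proof.

* The radial field `X(x) = x / ‖x‖²` has divergence `c / ‖x‖²` away from the origin. Since `v` is
  `C¹` with compact support avoiding the origin, `‖v‖² X` is a `C¹` compactly supported field on the
  whole space, so `∫ div (‖v‖² X) = 0`.
* Expanding `0 ≤ ∑ᵢ ‖∇ᵢv + (c / 2) (xᵢ / ‖x‖²) v‖²` and using that only the symmetric part of a
  matrix contributes to its quadratic form gives, pointwise for `x ≠ 0`,
  `(c² / 4) ‖v‖² / ‖x‖² ≤ ∑ᵢ ‖∇ᵢv‖² + c ‖x‖⁻¹ ‖Γ^S_r‖ ‖v‖² + (c / 2) div (‖v‖² X)`.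

Integrating the second over `ℝⁿ` makes the divergence term disappear, which is the claim.
-/

open MeasureTheory Matrix

/-- A function that vanishes off `tsupport v` and is continuous at every point of it is continuous
everywhere, hence integrable. This absorbs the singularity of the weights at the origin. -/
lemma integrable_of_tsupport {n N : ℕ}
    {v : EuclideanSpace ℝ (Fin n) → EuclideanSpace ℝ (Fin N)} (hcs : HasCompactSupport v)
    {φ : EuclideanSpace ℝ (Fin n) → ℝ} (h1 : ∀ x ∈ tsupport v, ContinuousAt φ x)
    (h0 : ∀ x ∉ tsupport v, φ x = 0) : Integrable φ := by
  refine Continuous.integrable_of_hasCompactSupport (continuous_iff_continuousAt.2 fun x => ?_)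
    (HasCompactSupport.intro hcs h0)
  by_cases hx : x ∈ tsupport v
  · exact h1 x hx
  · have : φ =ᶠ[nhds x] fun _ => 0 :=
      Filter.eventually_of_mem ((isClosed_tsupport v).isOpen_compl.mem_nhds hx) h0
    exact continuousAt_const.congr this.symm

lemma inner_transpose_toEuclideanLin {N : ℕ} (A : Matrix (Fin N) (Fin N) ℝ)
    (v : EuclideanSpace ℝ (Fin N)) :
    inner ℝ v (Matrix.toEuclideanLin Aᵀ v) = inner ℝ v (Matrix.toEuclideanLin A v) := by
  have h (B : Matrix (Fin N) (Fin N) ℝ) := Matrix.inner_toEuclideanCLM B v v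
  calc inner ℝ v (Matrix.toEuclideanLin Aᵀ v) = _ := h Aᵀ
    _ = _ := by
      rw [Matrix.mulVec_transpose, dotProduct_comm, ← Matrix.dotProduct_mulVec]
    _ = _ := (h A).symm

/-- Only the symmetric part of the radial connection matrix enters its quadratic form, so that form
is bounded below through the operator norm of the symmetric part. -/
lemma neg_norm_le_sum_inner {n N : ℕ} (G : Fin n → Matrix (Fin N) (Fin N) ℝ)
    (x : EuclideanSpace ℝ (Fin n)) (v : EuclideanSpace ℝ (Fin N)) :
    -(‖Matrix.toEuclideanCLM (𝕜 := ℝ)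
        (‖x‖⁻¹ • ∑ i, x i • ((1 / 2 : ℝ) • (G i + (G i)ᵀ)))‖ * ‖v‖ ^ 2) ≤
      ‖x‖⁻¹ * ∑ i, x i * inner ℝ v (Matrix.toEuclideanLin (G i) v) := by
  set S := ‖x‖⁻¹ • ∑ i, x i • ((1 / 2 : ℝ) • (G i + (G i)ᵀ)) with hS
  have h1 : ‖x‖⁻¹ * ∑ i, x i * inner ℝ v (Matrix.toEuclideanLin (G i) v) =
      inner ℝ v (Matrix.toEuclideanCLM (𝕜 := ℝ) S v) := by
    change _ = inner ℝ v (Matrix.toEuclideanLin S v)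
    simp only [hS, map_smul, map_sum, map_add, LinearMap.smul_apply, LinearMap.sum_apply,
      LinearMap.add_apply, inner_smul_right, inner_sum, inner_add_right,
      inner_transpose_toEuclideanLin]
    congr 1
    refine Finset.sum_congr rfl fun i _ => ?_
    ring
  rw [h1]
  have h2 := abs_real_inner_le_norm v (Matrix.toEuclideanCLM (𝕜 := ℝ) S v)
  have h3 := (Matrix.toEuclideanCLM (𝕜 := ℝ) S).le_opNorm v
  have h4 := neg_le_of_abs_le h2
  nlinarith [norm_nonneg v, mul_le_mul_of_nonneg_left h3 (norm_nonneg v)]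

/-- The `i`-th component of the field `‖v‖² x / ‖x‖²`. -/
noncomputable def radialComponent {n N : ℕ}
    (v : EuclideanSpace ℝ (Fin n) → EuclideanSpace ℝ (Fin N)) (i : Fin n)
    (x : EuclideanSpace ℝ (Fin n)) : ℝ :=
  ‖v x‖ ^ 2 * (x i * (‖x‖ ^ 2)⁻¹)

lemma radialComponent_eq_zero {n N : ℕ}
    {v : EuclideanSpace ℝ (Fin n) → EuclideanSpace ℝ (Fin N)} (i : Fin n)
    {x : EuclideanSpace ℝ (Fin n)} (hx : x ∉ tsupport v) : radialComponent v i x = 0 := by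
  simp [radialComponent, image_eq_zero_of_notMem_tsupport hx]

lemma contDiff_radialComponent {n N : ℕ}
    {v : EuclideanSpace ℝ (Fin n) → EuclideanSpace ℝ (Fin N)}
    (hv : ContDiff ℝ 1 v) (h0 : (0 : EuclideanSpace ℝ (Fin n)) ∉ tsupport v) (i : Fin n) :
    ContDiff ℝ 1 (radialComponent v i) := by
  refine contDiff_iff_contDiffAt.2 fun x => ?_
  by_cases hx : x ∈ tsupport v
  · have hx0 : x ≠ 0 := fun h => h0 (h ▸ hx)
    have hp : ContDiff ℝ 1 fun y : EuclideanSpace ℝ (Fin n) => y i :=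
      (EuclideanSpace.proj (𝕜 := ℝ) i).contDiff
    exact (hv.norm_sq ℝ).contDiffAt.mul (hp.contDiffAt.mul
      ((contDiff_norm_sq ℝ).contDiffAt.inv (by positivity)))
  · have : radialComponent v i =ᶠ[nhds x] fun _ => 0 :=
      Filter.eventually_of_mem ((isClosed_tsupport v).isOpen_compl.mem_nhds hx)
        fun y hy => radialComponent_eq_zero i hy
    exact contDiffAt_const.congr_of_eventuallyEq this

lemma fderiv_radialComponent {n N : ℕ}
    {v : EuclideanSpace ℝ (Fin n) → EuclideanSpace ℝ (Fin N)}
    (hv : ContDiff ℝ 1 v) (i : Fin n) {x : EuclideanSpace ℝ (Fin n)} (hx : x ≠ 0) :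
    fderiv ℝ (radialComponent v i) x (EuclideanSpace.single i 1) =
      2 * inner ℝ (v x) (fderiv ℝ v x (EuclideanSpace.single i 1)) * (x i * (‖x‖ ^ 2)⁻¹) +
        ‖v x‖ ^ 2 * ((‖x‖ ^ 2)⁻¹ - 2 * x i ^ 2 * ((‖x‖ ^ 2) ^ 2)⁻¹) := by
  have h1 := (hv.differentiable one_ne_zero x).hasFDerivAt.norm_sq
  have h2 : HasFDerivAt (fun y : EuclideanSpace ℝ (Fin n) => y i)
      (EuclideanSpace.proj (𝕜 := ℝ) i) x := (EuclideanSpace.proj (𝕜 := ℝ) i).hasFDerivAt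
  have hs : ‖x‖ ^ 2 ≠ 0 := by positivity
  have h3 := (hasDerivAt_inv hs).comp_hasFDerivAt x (hasFDerivAt_id x).norm_sq
  have h4 : HasFDerivAt (radialComponent v i) _ x := h1.mul (h2.mul h3)
  have h5 : inner ℝ x (EuclideanSpace.single i (1 : ℝ)) = x i := by
    simp [EuclideanSpace.inner_single_right]
  rw [h4.fderiv]
  simp [h5]
  ring

/-- `div (‖v‖² x / ‖x‖²)` away from the origin. -/
lemma sum_fderiv_radialComponent {n N : ℕ}
    {v : EuclideanSpace ℝ (Fin n) → EuclideanSpace ℝ (Fin N)}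
    (hv : ContDiff ℝ 1 v) {x : EuclideanSpace ℝ (Fin n)} (hx : x ≠ 0) :
    ∑ i, fderiv ℝ (radialComponent v i) x (EuclideanSpace.single i 1) =
      2 * (‖x‖ ^ 2)⁻¹ * ∑ i, x i * inner ℝ (v x) (fderiv ℝ v x (EuclideanSpace.single i 1)) +
        ((n : ℝ) - 2) * (‖v x‖ ^ 2 / ‖x‖ ^ 2) := by
  have hs : ‖x‖ ^ 2 ≠ 0 := by positivity
  have hsum : ∑ i, x i ^ 2 = ‖x‖ ^ 2 := (EuclideanSpace.real_norm_sq_eq x).symm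
  simp only [fderiv_radialComponent hv _ hx]
  rw [Finset.sum_add_distrib, ← Finset.mul_sum, Finset.sum_sub_distrib, ← Finset.sum_mul,
    ← Finset.mul_sum, hsum, Finset.mul_sum]
  simp only [Finset.sum_const, Finset.card_univ, Fintype.card_fin, nsmul_eq_mul]
  congr 1
  · exact Finset.sum_congr rfl fun i _ => by ring
  · field_simp

/-- The divergence theorem for compactly supported fields, one component at a time. -/
lemma integral_fderiv_eq_zero {n : ℕ} {g : EuclideanSpace ℝ (Fin n) → ℝ} (hg : ContDiff ℝ 1 g)
    (hc : HasCompactSupport g) (e : EuclideanSpace ℝ (Fin n)) :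
    Integrable (fun x => fderiv ℝ g x e) ∧ ∫ x, fderiv ℝ g x e = 0 := by
  have hi : Integrable (fun x => fderiv ℝ g x e) :=
    ((hg.continuous_fderiv one_ne_zero).clm_apply continuous_const).integrable_of_hasCompactSupport
      (hc.fderiv_apply (𝕜 := ℝ) e)
  refine ⟨hi, ?_⟩
  -- Integration by parts against the constant function `1`.
  have := integral_mul_fderiv_eq_neg_fderiv_mul_of_integrable (μ := volume)
    (f := fun _ : EuclideanSpace ℝ (Fin n) => (1 : ℝ)) (g := g) (v := e)
    (by simp) (by simpa using hi)
    (by simpa using hg.continuous.integrable_of_hasCompactSupport hc)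
    (fun x _ => differentiableAt_const _) (fun x _ => hg.differentiable one_ne_zero x)
  simpa using this

/-- Completing the square: the expansion of `∑ᵢ ‖pᵢ - mᵢ + (c / 2) (xᵢ / ‖x‖²) w‖² ≥ 0`. -/
lemma complete_square {n N : ℕ} (c : ℝ) {x : EuclideanSpace ℝ (Fin n)} (hx : x ≠ 0)
    (p m : Fin n → EuclideanSpace ℝ (Fin N)) (w : EuclideanSpace ℝ (Fin N)) :
    0 ≤ ∑ i, ‖p i - m i‖ ^ 2 + c * (‖x‖ ^ 2)⁻¹ * ∑ i, x i * inner ℝ w (p i)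
        - c * (‖x‖ ^ 2)⁻¹ * ∑ i, x i * inner ℝ w (m i)
        + c ^ 2 / 4 * (‖w‖ ^ 2 / ‖x‖ ^ 2) := by
  have hs : ‖x‖ ≠ 0 := by positivity
  have hsum : ∑ i, x i ^ 2 = ‖x‖ ^ 2 := (EuclideanSpace.real_norm_sq_eq x).symm
  have hsq : 0 ≤ ∑ i, ‖(p i - m i) + (c / 2 * (x i * (‖x‖ ^ 2)⁻¹)) • w‖ ^ 2 :=
    Finset.sum_nonneg fun i _ => sq_nonneg _
  have h : c ^ 2 / 4 * (‖w‖ ^ 2 / ‖x‖ ^ 2) =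
      ∑ i, (c ^ 2 / 4 * ‖w‖ ^ 2 * ((‖x‖ ^ 2) ^ 2)⁻¹) * x i ^ 2 := by
    rw [← Finset.mul_sum, hsum]
    field_simp
  rw [h, Finset.mul_sum, Finset.mul_sum, ← Finset.sum_add_distrib, ← Finset.sum_sub_distrib,
    ← Finset.sum_add_distrib]
  refine hsq.trans_eq (Finset.sum_congr rfl fun i _ => ?_)
  rw [norm_add_sq_real, inner_smul_right, real_inner_comm, inner_sub_right, norm_smul, mul_pow,
    Real.norm_eq_abs, sq_abs]
  ring

/-- The pointwise inequality: the derivative part of the cross term in `complete_square` is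
`c / 2` times the divergence of `‖v‖² x / ‖x‖²`, minus `(c² / 2) ‖v‖² / ‖x‖²`. -/
lemma pointwise_hardy {n N : ℕ} (hn : 3 ≤ n) (G : Fin n → Matrix (Fin N) (Fin N) ℝ)
    {v : EuclideanSpace ℝ (Fin n) → EuclideanSpace ℝ (Fin N)}
    (hv : ContDiff ℝ 1 v) {x : EuclideanSpace ℝ (Fin n)} (hx : x ≠ 0) :
    ((n : ℝ) - 2) ^ 2 / 4 * (‖v x‖ ^ 2 / ‖x‖ ^ 2) ≤
      (∑ i, ‖fderiv ℝ v x (EuclideanSpace.single i 1) -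
          Matrix.toEuclideanLin (G i) (v x)‖ ^ 2) +
        ((n : ℝ) - 2) * (‖x‖⁻¹ * ‖Matrix.toEuclideanCLM (𝕜 := ℝ)
              (‖x‖⁻¹ • ∑ i, x i • ((1 / 2 : ℝ) • (G i + (G i)ᵀ)))‖ * ‖v x‖ ^ 2) +
        ((n : ℝ) - 2) / 2 *
          ∑ i, fderiv ℝ (radialComponent v i) x (EuclideanSpace.single i 1) := by
  have hc : (0 : ℝ) ≤ (n : ℝ) - 2 := by
    have : (3 : ℝ) ≤ n := by exact_mod_cast hn
    linarith
  rw [sum_fderiv_radialComponent hv hx]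
  have hK := mul_le_mul_of_nonneg_left (neg_norm_le_sum_inner G x (v x))
    (mul_nonneg hc (inv_nonneg.2 (norm_nonneg x)))
  have hsq := complete_square ((n : ℝ) - 2) hx
    (fun i => fderiv ℝ v x (EuclideanSpace.single i 1))
    (fun i => Matrix.toEuclideanLin (G i) (v x)) (v x)
  beta_reduce at hsq
  generalize ‖Matrix.toEuclideanCLM (𝕜 := ℝ)
    (‖x‖⁻¹ • ∑ i, x i • ((1 / 2 : ℝ) • (G i + (G i)ᵀ)))‖ = K at hK ⊢
  generalize ∑ i, x i * inner ℝ (v x) (Matrix.toEuclideanLin (G i) (v x)) = M at hK hsq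
  generalize ∑ i, x i * inner ℝ (v x) (fderiv ℝ v x (EuclideanSpace.single i 1)) = P at hsq ⊢
  generalize ‖v x‖ ^ 2 / ‖x‖ ^ 2 = q at hsq ⊢
  have h5 : ((n : ℝ) - 2) * ‖x‖⁻¹ * (‖x‖⁻¹ * M) = ((n : ℝ) - 2) * (‖x‖ ^ 2)⁻¹ * M := by ring
  rw [h5] at hK
  linarith

/-- The weighted Hardy-type inequality with a possibly metric-incompatible
connection term, from the proof of Theorem 8.4 of the paper:
`((n-2)²/4) ∫ ‖v‖²/|x|² ≤ ∫ ∑ᵢ ‖∇ᵢv‖² + (n-2) ∫ |x|⁻¹ ‖Γ^S_r‖_op ‖v‖²`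
for `v` a `C¹` vector-valued function compactly supported in `{‖x‖ > R₀}`. -/
theorem stmt_13 (n N : ℕ) (hn : 3 ≤ n) (hN : 1 ≤ N) (R₀ : ℝ) (hR₀ : 0 < R₀)
    (Γ : Fin n → EuclideanSpace ℝ (Fin n) → Matrix (Fin N) (Fin N) ℝ)
    (hΓ : ∀ i, Continuous (Γ i))
    (v : EuclideanSpace ℝ (Fin n) → EuclideanSpace ℝ (Fin N))
    (hv : ContDiff ℝ 1 v) (hcs : HasCompactSupport v)
    (hsupp : tsupport v ⊆ {x | R₀ < ‖x‖}) :
    ((n : ℝ) - 2) ^ 2 / 4 * ∫ x, ‖v x‖ ^ 2 / ‖x‖ ^ 2 ≤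
      (∫ x, ∑ i, ‖fderiv ℝ v x (EuclideanSpace.single i 1) -
          Matrix.toEuclideanLin (Γ i x) (v x)‖ ^ 2) +
        ((n : ℝ) - 2) *
          ∫ x, ‖x‖⁻¹ *
            ‖Matrix.toEuclideanCLM (𝕜 := ℝ)
              (‖x‖⁻¹ • ∑ i, x i •
                ((1 / 2 : ℝ) • (Γ i x + (Γ i x)ᵀ)))‖ * ‖v x‖ ^ 2 := by
  have h0 : (0 : EuclideanSpace ℝ (Fin n)) ∉ tsupport v := fun h => by
    have := hsupp h
    simp only [Set.mem_ofPred_eq, norm_zero] at this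
    linarith
  have hne : ∀ x ∈ tsupport v, x ≠ 0 := fun x hx h => h0 (h ▸ hx)
  have hvz : ∀ x ∉ tsupport v, v x = 0 := fun x hx => image_eq_zero_of_notMem_tsupport hx
  have hdz : ∀ x ∉ tsupport v, fderiv ℝ v x = 0 := fun x hx =>
    Function.notMem_support.1 fun h => hx (support_fderiv_subset ℝ h)
  have hdv := hv.continuous_fderiv one_ne_zero
  have hlin : Continuous fun A : Matrix (Fin N) (Fin N) ℝ => Matrix.toEuclideanCLM (𝕜 := ℝ) A :=
    LinearMap.continuous_of_finiteDimensional
      (Matrix.toEuclideanCLM (n := Fin N) (𝕜 := ℝ)).toAlgEquiv.toLinearMap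
  have hA : Integrable fun x => ‖v x‖ ^ 2 / ‖x‖ ^ 2 := by
    refine integrable_of_tsupport hcs (fun x hx => ?_) fun x hx => by simp [hvz x hx]
    have := hne x hx
    exact (hv.continuous.norm.pow 2).continuousAt.div (continuous_norm.pow 2).continuousAt
      (by positivity)
  have hB : Integrable fun x => ∑ i, ‖fderiv ℝ v x (EuclideanSpace.single i 1) -
      Matrix.toEuclideanLin (Γ i x) (v x)‖ ^ 2 := by
    refine integrable_of_tsupport hcs (fun x _ => Continuous.continuousAt ?_)
      fun x hx => by simp [hvz x hx, hdz x hx]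
    refine continuous_finsetSum _ fun i _ => Continuous.pow (Continuous.norm ?_) 2
    exact (hdv.clm_apply continuous_const).sub ((hlin.comp (hΓ i)).clm_apply hv.continuous)
  have hC : Integrable fun x => ‖x‖⁻¹ *
            ‖Matrix.toEuclideanCLM (𝕜 := ℝ)
              (‖x‖⁻¹ • ∑ i, x i •
                ((1 / 2 : ℝ) • (Γ i x + (Γ i x)ᵀ)))‖ * ‖v x‖ ^ 2 := by
    refine integrable_of_tsupport hcs (fun x hx => ?_) fun x hx => by simp [hvz x hx]
    have hinv : ContinuousAt (fun y : EuclideanSpace ℝ (Fin n) => ‖y‖⁻¹) x :=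
      continuous_norm.continuousAt.inv₀ (norm_ne_zero_iff.2 (hne x hx))
    have hsumc : Continuous fun y : EuclideanSpace ℝ (Fin n) =>
        ∑ i, y i • ((1 / 2 : ℝ) • (Γ i y + (Γ i y)ᵀ)) := by
      refine continuous_finsetSum _ fun i _ => ?_
      have hsym : Continuous fun y => (1 / 2 : ℝ) • (Γ i y + (Γ i y)ᵀ) :=
        ((hΓ i).add (hΓ i).matrix_transpose).const_smul (1 / 2 : ℝ)
      exact (EuclideanSpace.proj (𝕜 := ℝ) i).continuous.smul hsym
    exact (hinv.mul (hlin.continuousAt.comp (hinv.smul hsumc.continuousAt)).norm).mul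
      (hv.continuous.norm.pow 2).continuousAt
  have hD := fun i => integral_fderiv_eq_zero (contDiff_radialComponent hv h0 i)
    (HasCompactSupport.intro hcs fun x hx => radialComponent_eq_zero i hx)
    (EuclideanSpace.single i 1)
  have hDi : Integrable fun x => ∑ i, fderiv ℝ (radialComponent v i) x (EuclideanSpace.single i 1) :=
    integrable_finsetSum _ fun i _ => (hD i).1
  have hD0 : ∫ x, ∑ i, fderiv ℝ (radialComponent v i) x (EuclideanSpace.single i 1) = 0 := by
    rw [integral_finsetSum _ fun i _ => (hD i).1]
    exact Finset.sum_eq_zero fun i _ => (hD i).2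
  have hnt : Nontrivial (EuclideanSpace ℝ (Fin n)) := by
    have : Nonempty (Fin n) := ⟨⟨0, by omega⟩⟩
    infer_instance
  have key := integral_mono_ae (hA.const_mul (((n : ℝ) - 2) ^ 2 / 4))
    ((hB.add (hC.const_mul ((n : ℝ) - 2))).add (hDi.const_mul (((n : ℝ) - 2) / 2)))
    (by
      filter_upwards [Measure.ae_ne volume (0 : EuclideanSpace ℝ (Fin n))] with x hx
      exact pointwise_hardy hn (fun i => Γ i x) hv hx)
  rw [integral_add' (hB.add (hC.const_mul _)) (hDi.const_mul _),
    integral_add' hB (hC.const_mul _), integral_const_mul, integral_const_mul,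
    integral_const_mul, hD0, mul_zero, add_zero] at key
  exact key
end

section
/- Let n ∈ ℕ with n ≥ 2, let x₀ > 0, and let f : [0,x₀] → ℝ be continuously differentiable with f(0) = 0. Then ∫₀^{x₀} f(x)² x^{−n} dx ≤ (4/(n−1)²) ∫₀^{x₀} f'(x)² x^{2−n} dx, where both sides are Lebesgue integrals of nonnegative measurable functions, with values in [0,∞]. -/
/-! The inequality is a Schur test for the Hardy operator `f' ↦ f = ∫₀ˣ f'`. Put `b = (n - 1) / 2`.
Cauchy-Schwarz with the weight `t ^ (1 - b)` gives
`f(x)² ≤ (∫₀ˣ |f'|)² ≤ (x ^ b / b) ∫₀ˣ f'(t)² t ^ (1 - b) dt` (`sq_lintegral_le_weighted`).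
Multiply by `x⁻ⁿ = x ^ (-2b - 1)`, integrate in `x`, and exchange the integrals by Tonelli: since
`∫ₜ^∞ x ^ (-b - 1) / b dx = t ^ (-b) / b²` (`lintegral_Ioi_rpow`), the result is
`b⁻² ∫ f'(t)² t ^ (1 - 2b) dt`, and `1 - 2b = 2 - n`, `b⁻² = 4 / (n - 1)²`.
All integrands are nonnegative, so neither a boundary term at `0` nor integrability has to be
discussed.
-/

open MeasureTheory

lemma lintegral_Ioo_rpow {b x : ℝ} (hb : 0 < b) (hx : 0 < x) :
    ∫⁻ t in Set.Ioo 0 x, ENNReal.ofReal (t ^ (b - 1)) = ENNReal.ofReal (x ^ b / b) := by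
  have hint : IntegrableOn (fun t : ℝ => t ^ (b - 1)) (Set.Ioo 0 x) :=
    ((intervalIntegrable_iff_integrableOn_Ioo_of_le hx.le).1
      (intervalIntegral.intervalIntegrable_rpow' (by linarith)))
  rw [← ofReal_integral_eq_lintegral_ofReal hint]
  · rw [← integral_Ioc_eq_integral_Ioo, ← intervalIntegral.integral_of_le hx.le,
      integral_rpow (Or.inl (by linarith))]
    simp [Real.zero_rpow hb.ne']
  · exact (ae_restrict_iff' measurableSet_Ioo).2
      (Filter.Eventually.of_forall fun t ht => Real.rpow_nonneg ht.1.le _)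

lemma lintegral_Ioi_rpow {b t : ℝ} (hb : 0 < b) (ht : 0 < t) :
    ∫⁻ x in Set.Ioi t, ENNReal.ofReal (x ^ (-b - 1)) = ENNReal.ofReal (t ^ (-b) / b) := by
  rw [← ofReal_integral_eq_lintegral_ofReal (integrableOn_Ioi_rpow_of_lt (by linarith) ht)]
  · rw [integral_Ioi_rpow_of_lt (by linarith) ht]
    simp [neg_div_neg_eq]
  · exact (ae_restrict_iff' measurableSet_Ioi).2
      (Filter.Eventually.of_forall fun x hx => Real.rpow_nonneg (ht.trans hx).le _)

/-- Cauchy-Schwarz on `(0, x)` for the factorization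
`|g| = (|g| t ^ ((1 - b) / 2)) (t ^ ((b - 1) / 2))`. -/
lemma sq_lintegral_le_weighted {g : ℝ → ℝ} (hg : Continuous g) {b x : ℝ} (hb : 0 < b)
    (hx : 0 < x) :
    (∫⁻ t in Set.Ioo 0 x, ENNReal.ofReal |g t|) ^ 2 ≤
      (∫⁻ t in Set.Ioo 0 x, ENNReal.ofReal (g t ^ 2 * t ^ (1 - b))) *
        ENNReal.ofReal (x ^ b / b) := by
  have hmg : Measurable g := hg.measurable
  have key := ENNReal.lintegral_mul_le_Lp_mul_Lq (volume.restrict (Set.Ioo 0 x))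
    Real.HolderConjugate.two_two
    (f := fun t => ENNReal.ofReal (|g t| * t ^ ((1 - b) / 2)))
    (g := fun t => ENNReal.ofReal (t ^ ((b - 1) / 2)))
    (by fun_prop) (by fun_prop)
  have e1 : ∫⁻ t in Set.Ioo 0 x, ENNReal.ofReal |g t| =
      ∫⁻ t in Set.Ioo 0 x, ((fun t => ENNReal.ofReal (|g t| * t ^ ((1 - b) / 2))) *
        (fun t => ENNReal.ofReal (t ^ ((b - 1) / 2)))) t := by
    refine setLIntegral_congr_fun measurableSet_Ioo fun t ht => ?_
    have h0 : 0 < t := ht.1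
    simp only [Pi.mul_apply]
    rw [← ENNReal.ofReal_mul (by positivity), mul_assoc, ← Real.rpow_add h0]
    ring_nf
    simp
  have e2 : ∫⁻ t in Set.Ioo 0 x, ENNReal.ofReal (|g t| * t ^ ((1 - b) / 2)) ^ (2 : ℝ) =
      ∫⁻ t in Set.Ioo 0 x, ENNReal.ofReal (g t ^ 2 * t ^ (1 - b)) := by
    refine setLIntegral_congr_fun measurableSet_Ioo fun t ht => ?_
    have h0 : 0 < t := ht.1
    rw [ENNReal.rpow_two, ← ENNReal.ofReal_pow (by positivity), mul_pow, sq_abs,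
      ← Real.rpow_mul_natCast h0.le]
    congr 3
    push_cast; ring
  have e3 : ∫⁻ t in Set.Ioo 0 x, ENNReal.ofReal (t ^ ((b - 1) / 2)) ^ (2 : ℝ) =
      ENNReal.ofReal (x ^ b / b) := by
    rw [← lintegral_Ioo_rpow hb hx]
    refine setLIntegral_congr_fun measurableSet_Ioo fun t ht => ?_
    have h0 : 0 < t := ht.1
    rw [ENNReal.rpow_two, ← ENNReal.ofReal_pow (by positivity), ← Real.rpow_mul_natCast h0.le]
    congr 2
    push_cast; ring
  rw [← e1, e2, e3] at key
  calc _ ≤ _ := pow_le_pow_left' key 2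
    _ = _ := by
      rw [mul_pow, ← ENNReal.rpow_mul_natCast, ← ENNReal.rpow_mul_natCast]
      norm_num

/-- Tonelli on the triangle `0 < t < x ≤ x₀`, followed by enlarging the range of `x` to
`(t, ∞)`. -/
lemma lintegral_triangle_le {h k : ℝ → ENNReal} (hh : Measurable h) (hk : Measurable k) (x₀ : ℝ) :
    ∫⁻ x in Set.Ioc 0 x₀, k x * ∫⁻ t in Set.Ioo 0 x, h t ≤
      ∫⁻ t in Set.Ioc 0 x₀, h t * ∫⁻ x in Set.Ioi t, k x := by
  set F : ℝ → ℝ → ENNReal := fun x t =>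
    {p : ℝ × ℝ | p.2 < p.1}.indicator (fun p => k p.1 * h p.2) (x, t) with hF
  have hFm : Measurable (Function.uncurry F) :=
    Measurable.indicator (by fun_prop) (measurableSet_lt measurable_snd measurable_fst)
  calc ∫⁻ x in Set.Ioc 0 x₀, k x * ∫⁻ t in Set.Ioo 0 x, h t
      ≤ ∫⁻ x in Set.Ioc 0 x₀, ∫⁻ t in Set.Ioc 0 x₀, F x t := by
        refine setLIntegral_mono' measurableSet_Ioc fun x hx => ?_
        rw [← lintegral_const_mul _ hh]
        calc _ = ∫⁻ t in Set.Ioo 0 x, F x t := by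
              refine setLIntegral_congr_fun measurableSet_Ioo fun t ht => ?_
              simp [hF, Set.indicator, ht.2]
          _ ≤ _ := lintegral_mono_set (Set.Ioo_subset_Ioc_self.trans
              (Set.Ioc_subset_Ioc_right hx.2))
    _ = ∫⁻ t in Set.Ioc 0 x₀, ∫⁻ x in Set.Ioc 0 x₀, F x t :=
        lintegral_lintegral_swap hFm.aemeasurable
    _ ≤ _ := by
        refine lintegral_mono fun t => ?_
        rw [← lintegral_const_mul _ hk, ← lintegral_indicator measurableSet_Ioi]
        refine (setLIntegral_le_lintegral _ _).trans (lintegral_mono fun x => ?_)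
        simp only [hF, Set.indicator, Set.mem_ofPred_eq, Set.mem_Ioi]
        split_ifs
        · rw [mul_comm]
        · exact le_rfl

/-- The one-dimensional McKean/weighted Hardy inequality (equation (8.12)):
for `f : [0,x₀] → ℝ` continuously differentiable with `f(0) = 0` and `n ≥ 2`,
`∫₀^{x₀} f² x^{-n} dx ≤ (4/(n-1)²) ∫₀^{x₀} (f')² x^{2-n} dx`, both sides being
Lebesgue integrals with values in `[0,∞]`. -/
theorem stmt_14 (n : ℕ) (hn : 2 ≤ n) (x₀ : ℝ) (hx₀ : 0 < x₀)
    (f : ℝ → ℝ) (hf : ContDiffOn ℝ 1 f (Set.Icc 0 x₀)) (hf0 : f 0 = 0) :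
    ∫⁻ x in Set.Ioc 0 x₀, ENNReal.ofReal (f x ^ 2 / x ^ n) ≤
      ENNReal.ofReal (4 / ((n : ℝ) - 1) ^ 2) *
        ∫⁻ x in Set.Ioc 0 x₀,
          ENNReal.ofReal (derivWithin f (Set.Icc 0 x₀) x ^ 2 * x ^ 2 / x ^ n) := by
  have hn' : (2 : ℝ) ≤ n := by exact_mod_cast hn
  obtain ⟨b, hbdef⟩ : ∃ b : ℝ, b = ((n : ℝ) - 1) / 2 := ⟨_, rfl⟩
  have hb : 0 < b := by rw [hbdef]; linarith
  have hnb : (n : ℝ) = 2 * b + 1 := by rw [hbdef]; ring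
  have hcont : ContinuousOn (derivWithin f (Set.Icc 0 x₀)) (Set.Icc 0 x₀) :=
    hf.continuousOn_derivWithin (uniqueDiffOn_Icc hx₀) le_rfl
  -- A continuous extension of `f'` to `ℝ` makes every measurability condition global.
  obtain ⟨g, hg, hgeq⟩ : ∃ g : ℝ → ℝ, Continuous g ∧
      ∀ x ∈ Set.Icc 0 x₀, g x = derivWithin f (Set.Icc 0 x₀) x :=
    ⟨Set.IccExtend hx₀.le ((Set.Icc 0 x₀).domRestrict (derivWithin f (Set.Icc 0 x₀))),
      (continuousOn_iff_continuous_domRestrict.1 hcont).Icc_extend',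
      fun x hx => by rw [Set.IccExtend_of_mem _ _ hx]; rfl⟩
  have hmg : Measurable g := hg.measurable
  have hftc : ∀ x ∈ Set.Ioc 0 x₀,
      ENNReal.ofReal |f x| ≤ ∫⁻ t in Set.Ioo 0 x, ENNReal.ofReal |g t| := by
    intro x hx
    have hsub : Set.Icc 0 x ⊆ Set.Icc 0 x₀ := Set.Icc_subset_Icc_right hx.2
    have h1 : ∫ t in (0 : ℝ)..x, g t = f x - f 0 := by
      refine intervalIntegral.integral_eq_sub_of_hasDerivAt_of_le hx.1.le
        (hf.continuousOn.mono hsub) (fun t ht => ?_) (hg.intervalIntegrable _ _)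
      have htm : t ∈ Set.Icc 0 x₀ := hsub ⟨ht.1.le, ht.2.le⟩
      rw [hgeq t htm]
      exact ((hf.differentiableOn one_ne_zero t htm).hasDerivWithinAt).hasDerivAt
        (Icc_mem_nhds ht.1 (ht.2.trans_le hx.2))
    rw [hf0, sub_zero, intervalIntegral.integral_of_le hx.1.le,
      integral_Ioc_eq_integral_Ioo] at h1
    have h2 := enorm_integral_le_lintegral_enorm (μ := volume.restrict (Set.Ioo 0 x)) g
    rw [h1] at h2
    simpa only [Real.enorm_eq_ofReal_abs] using h2
  calc ∫⁻ x in Set.Ioc 0 x₀, ENNReal.ofReal (f x ^ 2 / x ^ n)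
      ≤ ∫⁻ x in Set.Ioc 0 x₀, ENNReal.ofReal (x ^ (-b - 1)) *
          ∫⁻ t in Set.Ioo 0 x, ENNReal.ofReal (b⁻¹ * (g t ^ 2 * t ^ (1 - b))) := by
        refine setLIntegral_mono' measurableSet_Ioc fun x hx => ?_
        have h0 : 0 < x := hx.1
        simp_rw [ENNReal.ofReal_mul (inv_nonneg.2 hb.le)]
        rw [lintegral_const_mul _ (by fun_prop)]
        have hle := (pow_le_pow_left' (hftc x hx) 2).trans (sq_lintegral_le_weighted hg hb h0)
        rw [← ENNReal.ofReal_pow (abs_nonneg _), sq_abs] at hle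
        have hw : x ^ (-b - 1) * b⁻¹ = x ^ b / b * (x ^ n)⁻¹ := by
          rw [← Real.rpow_natCast x n, ← Real.rpow_neg h0.le, hnb, div_mul_eq_mul_div,
            ← Real.rpow_add h0, div_eq_mul_inv]
          ring_nf
        rw [← mul_assoc, ← ENNReal.ofReal_mul (by positivity), hw,
          ENNReal.ofReal_mul (by positivity), div_eq_mul_inv, ENNReal.ofReal_mul (by positivity)]
        calc _ ≤ _ := mul_le_mul_left hle _
          _ = _ := by ring
    _ ≤ ∫⁻ t in Set.Ioc 0 x₀, ENNReal.ofReal (b⁻¹ * (g t ^ 2 * t ^ (1 - b))) *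
          ∫⁻ x in Set.Ioi t, ENNReal.ofReal (x ^ (-b - 1)) :=
        lintegral_triangle_le (by fun_prop) (by fun_prop) x₀
    _ = ∫⁻ t in Set.Ioc 0 x₀, ENNReal.ofReal (4 / ((n : ℝ) - 1) ^ 2) *
          ENNReal.ofReal (derivWithin f (Set.Icc 0 x₀) t ^ 2 * t ^ 2 / t ^ n) := by
        refine setLIntegral_congr_fun measurableSet_Ioc fun t ht => ?_
        have h0 : 0 < t := ht.1
        rw [lintegral_Ioi_rpow hb h0, ← hgeq t ⟨ht.1.le, ht.2⟩,
          ← ENNReal.ofReal_mul (by positivity), ← ENNReal.ofReal_mul (by positivity)]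
        congr 1
        have hw : t ^ (1 - b) * t ^ (-b) = t ^ 2 / t ^ n := by
          rw [← Real.rpow_natCast t n, ← Real.rpow_natCast t 2, ← Real.rpow_add h0,
            ← Real.rpow_sub h0, hnb]
          congr 1
          push_cast; ring
        calc _ = (b⁻¹ * b⁻¹) * g t ^ 2 * (t ^ (1 - b) * t ^ (-b)) := by ring
          _ = _ := by
            rw [hw, hnb]
            field_simp
            ring
    _ = _ := lintegral_const_mul' _ _ ENNReal.ofReal_ne_top
end
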